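/- arXiv:2004.01163 — 5 statements merged into one kernel-verified Lean document; each statement's English description precedes it below -/
import Mathlib

section
/- Let G = (V, E) be a simple connected graph on a finite vertex set V with |V| ≥ 2, let i ∈ V, and let f : V → ℝ with f(i) = 0 and ∑_{v ∈ V} f(v)² = 1 be a minimizer of ∑_{(w1, w2) ∈ E} (f(w1) − f(w2))² among all such functions. Then for every edge (w1, w2) ∈ E one has f(w1) · f(w2) ≥ 0; that is, f does not take values of strictly opposite sign at any pair of adjacent vertices. -/
/-!
Replacing `f` by `|f|` preserves both constraints and does not increase the energy of any edge,
since `||a| - |b|| ≤ |a - b|`. On an edge where `f` takes values of strictly opposite sign this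
inequality is strict, so `|f|` would have strictly smaller energy than the minimizer `f`.
-/

open Matrix Finset

/-- The Dirichlet energy `∑_{(w1,w2) ∈ E} (f w1 - f w2)²`, each edge counted once. -/
noncomputable def energy {V : Type*} [Fintype V] [DecidableEq V]
    (G : SimpleGraph V) [DecidableRel G.Adj] (f : V → ℝ) : ℝ :=
  ∑ e ∈ G.edgeFinset, Sym2.lift ⟨fun a b => (f a - f b) ^ 2, fun a b => by ring⟩ e

theorem stmt_2 {V : Type*} [Fintype V] [DecidableEq V]
    (G : SimpleGraph V) [DecidableRel G.Adj]
    (hconn : G.Connected) (hcard : 2 ≤ Fintype.card V) (i : V)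
    (f : V → ℝ) (hfi : f i = 0) (hfnorm : ∑ v, (f v) ^ 2 = 1)
    (hmin : ∀ g : V → ℝ, g i = 0 → ∑ v, (g v) ^ 2 = 1 → energy G f ≤ energy G g) :
    ∀ w1 w2 : V, G.Adj w1 w2 → 0 ≤ f w1 * f w2 := by
  intro w1 w2 hadj
  by_contra! hneg
  refine (hmin (fun v => |f v|) (by simp [hfi]) (by simpa [sq_abs] using hfnorm)).not_gt ?_
  refine Finset.sum_lt_sum (fun e _ => ?_) ⟨s(w1, w2), by simpa using hadj, ?_⟩
  · induction e with
    | h a b => exact sq_le_sq.mpr (abs_abs_sub_abs_le_abs_sub (f a) (f b))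
  · change (|f w1| - |f w2|) ^ 2 < (f w1 - f w2) ^ 2
    -- The difference of the two sides is `2 (|f w1 * f w2| - f w1 * f w2)`.
    have habs : 0 ≤ |f w1| * |f w2| := by positivity
    nlinarith [sq_abs (f w1), sq_abs (f w2)]
end

section
/- Let G = (V, E) be a simple connected graph on a finite vertex set V with |V| ≥ 2, and let i ∈ V be such that the graph G − i is connected. Then the smallest eigenvalue of L_i is simple: its eigenspace is one-dimensional. In particular, the minimizer of ∑_{(w1, w2) ∈ E} (f(w1) − f(w2))² over all f : V → ℝ with f(i) = 0 and ∑_{v ∈ V} f(v)² = 1 is unique up to multiplication by −1. -/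
/-!
Put `M = L_i - μ`, where `μ` is the least eigenvalue of `L_i`. By the spectral theorem `M` is
positive semidefinite (`posSemidef_sub_of_mem_lowerBounds`), so its kernel is exactly the zero set
of its quadratic form. The off-diagonal entries of `M` are nonpositive, hence replacing a
kernel vector `x` by `|x|` does not increase the quadratic form, and `|x|` lies in the kernel too
(`mulVec_abs_eq_zero`). If `x` vanishes at a vertex `u`, row `u` of `M |x| = 0` is a vanishing sum
of nonpositive terms, so `x` vanishes at every neighbour of `u`; as `G - i` is connected, `x = 0`
(`eq_zero_of_apply_eq_zero`). Thus a nonzero kernel vector has no zero entry, and for two of them a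
suitable combination that vanishes at one vertex vanishes everywhere, which gives simplicity.

For functions vanishing at `i` the energy is the quadratic form of `L_i` (`energy_eq_dotProduct`),
so the restriction of an energy minimizer to `V \ {i}` lies in the kernel of `M`; two normalized
elements of a line agree up to sign.
-/

open Matrix Finset

/-- The matrix `L_i`: the Laplacian `L = D - A` of `G` with the row and column
indexed by `i` deleted. -/
noncomputable def lapMinor {V : Type*} [Fintype V] [DecidableEq V]
    (G : SimpleGraph V) [DecidableRel G.Adj] (i : V) :
    Matrix {v : V // v ≠ i} {v : V // v ≠ i} ℝ :=
  (G.lapMatrix ℝ).submatrix Subtype.val Subtype.val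

/-- A real symmetric matrix minus a lower bound `μ` of its eigenvalues is positive semidefinite:
an eigenvalue `t` of `A - μ` gives the eigenvalue `t + μ ≥ μ` of `A`. -/
theorem posSemidef_sub_of_mem_lowerBounds {n : Type*} [Fintype n] [DecidableEq n] {A : Matrix n n ℝ}
    (hA : A.IsHermitian) {μ : ℝ}
    (hμ : μ ∈ lowerBounds {μ' : ℝ | ∃ ψ : n → ℝ, ψ ≠ 0 ∧ A *ᵥ ψ = μ' • ψ}) :
    (A - μ • (1 : Matrix n n ℝ)).PosSemidef := by
  have hB : (A - μ • (1 : Matrix n n ℝ)).IsHermitian := by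
    refine hA.sub ?_
    simp [Matrix.IsHermitian]
  rw [hB.posSemidef_iff_eigenvalues_nonneg]
  intro j
  have h := hB.mulVec_eigenvectorBasis j
  rw [sub_mulVec, smul_mulVec, one_mulVec, sub_eq_iff_eq_add, ← add_smul] at h
  have hne : (hB.eigenvectorBasis j : n → ℝ) ≠ 0 := by
    intro h0
    apply hB.eigenvectorBasis.orthonormal.ne_zero j
    ext k
    exact congrFun h0 k
  have := hμ ⟨_, hne, h⟩
  simpa using this

theorem mulVec_abs_eq_zero {n : Type*} [Fintype n] [DecidableEq n] {M : Matrix n n ℝ}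
    (hM : M.PosSemidef) (hoff : ∀ u v, u ≠ v → M u v ≤ 0) {x : n → ℝ} (hx : M *ᵥ x = 0) :
    M *ᵥ |x| = 0 := by
  rw [← hM.dotProduct_mulVec_zero_iff]
  refine le_antisymm ?_ (hM.dotProduct_mulVec_nonneg _)
  have h0 : x ⬝ᵥ (M *ᵥ x) = 0 := by simp [hx]
  rw [← h0]
  simp only [dotProduct, mulVec, Finset.mul_sum, star_trivial, Pi.abs_apply]
  refine Finset.sum_le_sum fun u _ => Finset.sum_le_sum fun v _ => ?_
  by_cases huv : u = v
  · subst huv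
    exact le_of_eq (by linear_combination M u u * abs_mul_abs_self (x u))
  · have h1 : x u * x v ≤ |x u| * |x v| := by
      rw [← abs_mul]
      exact le_abs_self _
    nlinarith [mul_le_mul_of_nonpos_left h1 (hoff u v huv)]

/-- Zeros of a kernel vector propagate along the edges of a connected graph `H` on whose edges
`M` is strictly negative. -/
theorem eq_zero_of_apply_eq_zero {n : Type*} [Fintype n] [DecidableEq n] {M : Matrix n n ℝ}
    (hM : M.PosSemidef) (hoff : ∀ u v, u ≠ v → M u v ≤ 0) {H : SimpleGraph n} (hH : H.Connected)
    (hadj : ∀ u v, H.Adj u v → M u v < 0) {x : n → ℝ} (hx : M *ᵥ x = 0) {u : n} (hu : x u = 0) :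
    x = 0 := by
  have habs := mulVec_abs_eq_zero hM hoff hx
  have step : ∀ a b, H.Adj a b → x a = 0 → x b = 0 := by
    intro a b hab ha
    have hrow : ∑ v, M a v * |x v| = 0 := congrFun habs a
    have hterm : ∀ v ∈ Finset.univ, M a v * |x v| ≤ 0 := by
      intro v _
      by_cases hav : a = v
      · subst hav
        simp [ha]
      · exact mul_nonpos_of_nonpos_of_nonneg (hoff a v hav) (abs_nonneg _)
    have := (Finset.sum_eq_zero_iff_of_nonpos hterm).1 hrow b (Finset.mem_univ b)
    simpa [(hadj a b hab).ne] using this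
  funext v
  obtain ⟨p⟩ := hH.preconnected u v
  induction p with
  | nil => exact hu
  | cons h _ ih => exact ih (step _ _ h hu)

theorem exists_smul_of_mulVec_eq_zero {n : Type*} [Fintype n] [DecidableEq n] {M : Matrix n n ℝ}
    (hM : M.PosSemidef) (hoff : ∀ u v, u ≠ v → M u v ≤ 0) {H : SimpleGraph n} (hH : H.Connected)
    (hadj : ∀ u v, H.Adj u v → M u v < 0) {x y : n → ℝ} (hx0 : x ≠ 0) (hx : M *ᵥ x = 0)
    (hy : M *ᵥ y = 0) : ∃ c : ℝ, y = c • x := by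
  obtain ⟨u⟩ := hH.nonempty
  have hu : x u ≠ 0 := fun h => hx0 (eq_zero_of_apply_eq_zero hM hoff hH hadj hx h)
  refine ⟨y u / x u, ?_⟩
  have hz : M *ᵥ (y - (y u / x u) • x) = 0 := by
    rw [mulVec_sub, mulVec_smul, hx, hy, smul_zero, sub_zero]
  have := eq_zero_of_apply_eq_zero (u := u) hM hoff hH hadj hz (by simp [hu])
  exact sub_eq_zero.1 this

theorem energy_eq_half_sum {V : Type*} [Fintype V] [DecidableEq V]
    (G : SimpleGraph V) [DecidableRel G.Adj] (f : V → ℝ) :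
    energy G f = (∑ a, ∑ b, if G.Adj a b then (f a - f b) ^ 2 else 0) / 2 := by
  set F : Sym2 V → ℝ := Sym2.lift ⟨fun a b => (f a - f b) ^ 2, fun a b => by ring⟩ with hF
  have h1 : ∑ d : G.Dart, F d.edge = ∑ e ∈ G.edgeFinset, 2 * F e := by
    rw [← Finset.sum_fiberwise_of_maps_to (s := Finset.univ) (t := G.edgeFinset)
      (g := fun d : G.Dart => d.edge) (fun d _ => by simp)]
    refine Finset.sum_congr rfl fun e he => ?_
    rw [Finset.sum_congr rfl (g := fun _ => F e)
      (fun d hd => by rw [(Finset.mem_filter.1 hd).2]), Finset.sum_const,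
      G.dart_edge_fiber_card e (by simpa using he)]
    simp
  have h2 : ∑ d : G.Dart, F d.edge = ∑ a, ∑ b, if G.Adj a b then (f a - f b) ^ 2 else 0 := by
    rw [← Finset.sum_product', Finset.univ_product_univ, ← Finset.sum_filter]
    refine Finset.sum_bij' (fun d _ => (d.fst, d.snd))
      (fun p hp => ⟨p, (Finset.mem_filter.1 hp).2⟩) ?_ ?_ ?_ ?_ ?_
    · intro d _
      simp
    · simp
    · simp
    · simp
    · intro d _
      rfl
  rw [← h2, h1, ← Finset.mul_sum, mul_div_cancel_left₀ _ (two_ne_zero)]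
  rfl

theorem sum_eq_sum_ne {V : Type*} [Fintype V] [DecidableEq V] (i : V) {F : V → ℝ} (hF : F i = 0) :
    ∑ v, F v = ∑ v : {v : V // v ≠ i}, F v := by
  rw [← Finset.add_sum_erase _ _ (Finset.mem_univ i), hF, zero_add]
  exact Finset.sum_subtype _ (by simp) F

theorem energy_eq_dotProduct {V : Type*} [Fintype V] [DecidableEq V]
    (G : SimpleGraph V) [DecidableRel G.Adj] (i : V) {f : V → ℝ} (hf : f i = 0) :
    energy G f = (fun v : {v : V // v ≠ i} => f v) ⬝ᵥ
      (lapMinor G i *ᵥ fun v : {v : V // v ≠ i} => f v) := by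
  rw [energy_eq_half_sum, ← SimpleGraph.lapMatrix_toLinearMap₂', toLinearMap₂'_apply']
  simp only [dotProduct, mulVec, lapMinor, submatrix_apply]
  rw [sum_eq_sum_ne i (by simp [hf])]
  refine Finset.sum_congr rfl fun u _ => ?_
  rw [sum_eq_sum_ne i (by simp [hf])]

theorem stmt_5 {V : Type*} [Fintype V] [DecidableEq V]
    (G : SimpleGraph V) [DecidableRel G.Adj]
    (hconn : G.Connected) (hcard : 2 ≤ Fintype.card V) (i : V)
    (hconn' : (G.induce {v : V | v ≠ i}).Connected)
    (μ : ℝ)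
    (hμ : IsLeast {μ' : ℝ | ∃ ψ : {v : V // v ≠ i} → ℝ, ψ ≠ 0 ∧
        (lapMinor G i).mulVec ψ = μ' • ψ} μ) :
    -- the eigenspace of the smallest eigenvalue is one-dimensional
    (∀ φ ψ : {v : V // v ≠ i} → ℝ, φ ≠ 0 → ψ ≠ 0 →
      (lapMinor G i).mulVec φ = μ • φ → (lapMinor G i).mulVec ψ = μ • ψ →
      ∃ c : ℝ, ψ = c • φ) ∧
    -- in particular, the minimizer of the Dirichlet energy is unique up to sign
    (∀ f g : V → ℝ,
      f i = 0 → ∑ v, (f v) ^ 2 = 1 →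
      (∀ h : V → ℝ, h i = 0 → ∑ v, (h v) ^ 2 = 1 → energy G f ≤ energy G h) →
      g i = 0 → ∑ v, (g v) ^ 2 = 1 →
      (∀ h : V → ℝ, h i = 0 → ∑ v, (h v) ^ 2 = 1 → energy G g ≤ energy G h) →
      g = f ∨ g = -f) := by
  set M : Matrix {v : V // v ≠ i} {v : V // v ≠ i} ℝ := lapMinor G i - μ • 1 with hMdef
  have hM : M.PosSemidef :=
    posSemidef_sub_of_mem_lowerBounds ((G.isHermitian_lapMatrix ℝ).submatrix _) hμ.2
  have hentry : ∀ u v : {v : V // v ≠ i}, u ≠ v → M u v = if G.Adj u v then -1 else 0 := by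
    intro u v huv
    have huv' : (u : V) ≠ v := fun h => huv (Subtype.ext h)
    by_cases h : G.Adj u v <;>
      simp [hMdef, lapMinor, SimpleGraph.lapMatrix, SimpleGraph.degMatrix, huv, huv', h]
  have hoff : ∀ u v, u ≠ v → M u v ≤ 0 := by
    intro u v huv
    rw [hentry u v huv]
    split_ifs <;> norm_num
  have hadj : ∀ u v, (G.induce {v : V | v ≠ i}).Adj u v → M u v < 0 := by
    intro u v huv
    rw [hentry u v huv.ne, if_pos (by simpa using huv)]
    norm_num
  have hker : ∀ ψ : {v : V // v ≠ i} → ℝ, M *ᵥ ψ = lapMinor G i *ᵥ ψ - μ • ψ := by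
    intro ψ
    rw [hMdef, sub_mulVec, smul_mulVec, one_mulVec]
  refine ⟨?_, ?_⟩
  · intro φ ψ hφ _ hφe hψe
    exact exists_smul_of_mulVec_eq_zero hM hoff hconn' hadj hφ
      (by rw [hker, hφe, sub_self]) (by rw [hker, hψe, sub_self])
  · -- A normalized eigenvector for `μ`, extended by zero, has energy `μ`.
    obtain ⟨h, hhi, hh1, hhE⟩ : ∃ h : V → ℝ, h i = 0 ∧ ∑ v, (h v) ^ 2 = 1 ∧ energy G h = μ := by
      obtain ⟨ψ, hψ0, hψ⟩ := hμ.1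
      have hpos : 0 < ψ ⬝ᵥ ψ :=
        lt_of_le_of_ne (Finset.sum_nonneg fun v _ => mul_self_nonneg _)
          (fun h => hψ0 (dotProduct_self_eq_zero.1 h.symm))
      set r : ℝ := (√(ψ ⬝ᵥ ψ))⁻¹ with hr
      have hr2 : r * r * (ψ ⬝ᵥ ψ) = 1 := by
        rw [hr, ← mul_inv, Real.mul_self_sqrt hpos.le, inv_mul_cancel₀ hpos.ne']
      let h : V → ℝ := fun v => if hv : v ≠ i then r * ψ ⟨v, hv⟩ else 0
      have hi : h i = 0 := by simp [h]
      have hres : (fun v : {v : V // v ≠ i} => h v) = r • ψ := by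
        funext v
        simp [h, v.2]
      refine ⟨h, hi, ?_, ?_⟩
      · rw [sum_eq_sum_ne i (by simp [hi]), ← hr2, dotProduct, Finset.mul_sum]
        refine Finset.sum_congr rfl fun v _ => ?_
        rw [congrFun hres v, Pi.smul_apply, smul_eq_mul]
        ring
      · rw [energy_eq_dotProduct G i hi, hres, mulVec_smul, hψ]
        simp only [smul_dotProduct, dotProduct_smul, smul_eq_mul]
        linear_combination μ * hr2
    have hmin : ∀ f : V → ℝ, f i = 0 → ∑ v, (f v) ^ 2 = 1 →
        (∀ h : V → ℝ, h i = 0 → ∑ v, (h v) ^ 2 = 1 → energy G f ≤ energy G h) →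
        M *ᵥ (fun v : {v : V // v ≠ i} => f v) = 0 := by
      intro f hfi hf1 hfmin
      rw [← hM.dotProduct_mulVec_zero_iff]
      refine le_antisymm ?_ (hM.dotProduct_mulVec_nonneg _)
      have hn : (fun v : {v : V // v ≠ i} => f v) ⬝ᵥ (fun v : {v : V // v ≠ i} => f v) = 1 := by
        rw [← hf1, sum_eq_sum_ne i (by simp [hfi])]
        simp [dotProduct, sq]
      have hle := hfmin h hhi hh1
      rw [hhE, energy_eq_dotProduct G i hfi] at hle
      rw [star_trivial, hker, dotProduct_sub, dotProduct_smul, hn, smul_eq_mul]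
      linarith
    intro f g hfi hf1 hfmin hgi hg1 hgmin
    have hf0 : (fun v : {v : V // v ≠ i} => f v) ≠ 0 := by
      intro h0
      rw [sum_eq_sum_ne i (by simp [hfi])] at hf1
      have : ∀ v : {v : V // v ≠ i}, f v = 0 := fun v => congrFun h0 v
      simp [this] at hf1
    obtain ⟨c, hc⟩ := exists_smul_of_mulVec_eq_zero hM hoff hconn' hadj hf0
      (hmin f hfi hf1 hfmin) (hmin g hgi hg1 hgmin)
    have hgc : ∀ v, g v = c * f v := by
      intro v
      by_cases hv : v = i
      · rw [hv, hgi, hfi, mul_zero]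
      · exact congrFun hc ⟨v, hv⟩
    have hc2 : c ^ 2 = 1 := by
      simpa [hgc, mul_pow, ← Finset.mul_sum, hf1] using hg1
    rcases (show c = 1 ∨ c = -1 by simpa using hc2) with h | h
    · left
      funext v
      rw [hgc, h, one_mul]
    · right
      funext v
      rw [hgc, h, Pi.neg_apply, neg_one_mul]
end

section
/- Let G = (V, E) be a simple connected graph on a finite vertex set V with |V| ≥ 2, and let i ∈ V be such that the graph G − i is connected. Let φ be an eigenvector of L_i associated to the smallest eigenvalue of L_i, normalized so that φ ≥ 0, and extend φ to V by φ(i) = 0. For any starting vertex j ∈ V, define a sequence by x₀ = j and, as long as x_k ≠ i, letting x_{k+1} be a neighbor of x_k at which φ attains its minimum over all neighbors of x_k. Then for every j the sequence reaches i after at most |V| − 1 steps, and the values φ(x₀) > φ(x₁) > ⋯ are strictly decreasing; in particular, the algorithm produces a path from j to i in G. -/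
/-!
Write the eigenvalue equation at `v ≠ i` as `∑_{w ~ v} (φ v - φ w) = μ φ v`, which is legitimate
since `φ i = 0`.

* `φ > 0` off `i`: a zero of the nonnegative function `φ` at `v ≠ i` forces zeros at all
  neighbors of `v`, and `G - i` is connected, so `φ` would vanish identically.
* `μ > 0`: the columns of the Laplacian sum to zero, hence `μ ∑ φ = ∑_{w ~ i} φ w > 0`.
* Therefore `∑_{w ~ v} (φ v - φ w) > 0` for each `v ≠ i`, so some neighbor of `v` has a strictly
  smaller value of `φ`, and so does the minimizing one.

Strict decrease makes the visited vertices distinct, so the sequence cannot avoid `i` during its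
first `|V|` terms.
-/

open Matrix

section

variable {V : Type*} [Fintype V] [DecidableEq V] (G : SimpleGraph V) [DecidableRel G.Adj]

/-- As `φ i = 0`, deleting the column `i` does not change the product with `φ`. -/
lemma lapMinor_mulVec_apply (i : V) (φ : V → ℝ) (hφi : φ i = 0) (v : {v : V // v ≠ i}) :
    (lapMinor G i).mulVec (fun v : {v : V // v ≠ i} => φ v.1) v
      = (G.lapMatrix ℝ).mulVec φ v.1 := by
  simp only [lapMinor, Matrix.mulVec, dotProduct, Matrix.submatrix_apply]
  rw [← Finset.add_sum_erase _ _ (Finset.mem_univ i), hφi, mul_zero, zero_add]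
  exact (Finset.sum_subtype (Finset.univ.erase i) (by simp)
    fun w => G.lapMatrix ℝ v.1 w * φ w).symm

lemma lapMatrix_mulVec_eq_sum_sub (φ : V → ℝ) (v : V) :
    (G.lapMatrix ℝ).mulVec φ v = ∑ w ∈ G.neighborFinset v, (φ v - φ w) := by
  rw [SimpleGraph.lapMatrix_mulVec_apply, Finset.sum_sub_distrib]
  simp

lemma sum_lapMatrix_mulVec (φ : V → ℝ) : ∑ v, (G.lapMatrix ℝ).mulVec φ v = 0 := by
  have h : (fun _ => (1 : ℝ)) ⬝ᵥ (G.lapMatrix ℝ).mulVec φ = 0 := by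
    rw [Matrix.dotProduct_mulVec, ← Matrix.mulVec_transpose, (G.isSymm_lapMatrix (R := ℝ)).eq]
    rw [SimpleGraph.lapMatrix_mulVec_const_eq_zero, zero_dotProduct]
  simpa [dotProduct] using h

variable {G} {i : V} {μ : ℝ} {φ : V → ℝ}

/-- Zeros of `φ` off `i` propagate along the edges of the connected graph `G - i`. -/
lemma pos_of_eigen (hconn' : (G.induce {v : V | v ≠ i}).Connected)
    (hne : ∃ v, v ≠ i ∧ φ v ≠ 0) (hnonneg : ∀ v, 0 ≤ φ v)
    (hsum : ∀ v, v ≠ i → ∑ w ∈ G.neighborFinset v, (φ v - φ w) = μ * φ v)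
    {v : V} (hv : v ≠ i) : 0 < φ v := by
  by_contra hcon
  have hv0 : φ v = 0 := le_antisymm (not_lt.1 hcon) (hnonneg v)
  have hprop : ∀ a b : V, a ≠ i → G.Adj a b → φ a = 0 → φ b = 0 := by
    intro a b ha hab ha0
    have h := hsum a ha
    simp only [ha0, zero_sub, mul_zero, Finset.sum_neg_distrib, neg_eq_zero] at h
    exact (Finset.sum_eq_zero_iff_of_nonneg fun w _ => hnonneg w).1 h b (by simpa using hab)
  obtain ⟨u, hu, hu0⟩ := hne
  obtain ⟨p⟩ := hconn'.preconnected ⟨v, hv⟩ ⟨u, hu⟩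
  have key : ∀ (a b : {v : V | v ≠ i}), (G.induce {v : V | v ≠ i}).Walk a b →
      φ a = 0 → φ b = 0 := by
    intro a b p
    induction p with
    | nil => exact id
    | @cons a b c hab _ ih => exact fun ha => ih (hprop a b a.2 hab ha)
  exact hu0 (key _ _ p hv0)

lemma eigenvalue_pos (hconn : G.Connected) (hcard : 2 ≤ Fintype.card V) (hφi : φ i = 0)
    (hnonneg : ∀ v, 0 ≤ φ v) (hpos : ∀ v, v ≠ i → 0 < φ v)
    (hsum : ∀ v, v ≠ i → ∑ w ∈ G.neighborFinset v, (φ v - φ w) = μ * φ v) : 0 < μ := by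
  have : Nontrivial V := Fintype.one_lt_card_iff_nontrivial.1 hcard
  obtain ⟨w, hw⟩ := hconn.preconnected.exists_adj_of_nontrivial i
  have htot := sum_lapMatrix_mulVec G φ
  rw [← Finset.add_sum_erase _ _ (Finset.mem_univ i)] at htot
  simp only [lapMatrix_mulVec_eq_sum_sub] at htot
  rw [Finset.sum_congr rfl fun v hv => hsum v (Finset.ne_of_mem_erase hv), ← Finset.mul_sum] at htot
  have h1 : 0 < ∑ w ∈ G.neighborFinset i, φ w :=
    Finset.sum_pos' (fun w _ => hnonneg w) ⟨w, by simpa using hw, hpos w hw.ne'⟩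
  simp only [hφi, zero_sub, Finset.sum_neg_distrib] at htot
  have h2 : 0 < μ * ∑ v ∈ Finset.univ.erase i, φ v := by linarith
  exact pos_of_mul_pos_left h2 (Finset.sum_nonneg fun v _ => hnonneg v)

end

theorem stmt_7 {V : Type*} [Fintype V] [DecidableEq V]
    (G : SimpleGraph V) [DecidableRel G.Adj]
    (hconn : G.Connected) (hcard : 2 ≤ Fintype.card V) (i : V)
    (hconn' : (G.induce {v : V | v ≠ i}).Connected)
    (μ : ℝ)
    (hμ : IsLeast {μ' : ℝ | ∃ ψ : {v : V // v ≠ i} → ℝ, ψ ≠ 0 ∧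
        (lapMinor G i).mulVec ψ = μ' • ψ} μ)
    -- φ : V → ℝ is the extension by φ i = 0 of an eigenvector of L_i
    -- for the smallest eigenvalue μ, normalized so that φ ≥ 0
    (φ : V → ℝ) (hφi : φ i = 0)
    (hφne : (fun v : {v : V // v ≠ i} => φ v.1) ≠ 0)
    (heig : (lapMinor G i).mulVec (fun v : {v : V // v ≠ i} => φ v.1) =
      μ • fun v : {v : V // v ≠ i} => φ v.1)
    (hnonneg : ∀ v : V, 0 ≤ φ v)
    -- the algorithm: start at j, move to a neighbor minimizing φ
    (j : V) (x : ℕ → V) (hx0 : x 0 = j)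
    (hstep : ∀ k : ℕ, x k ≠ i →
      G.Adj (x k) (x (k + 1)) ∧ ∀ w : V, G.Adj (x k) w → φ (x (k + 1)) ≤ φ w) :
    ∃ n : ℕ, n ≤ Fintype.card V - 1 ∧ x n = i ∧
      ∀ k : ℕ, k < n → x k ≠ i ∧ φ (x (k + 1)) < φ (x k) := by
  have hsum : ∀ v, v ≠ i → ∑ w ∈ G.neighborFinset v, (φ v - φ w) = μ * φ v := by
    intro v hv
    rw [← lapMatrix_mulVec_eq_sum_sub, ← lapMinor_mulVec_apply G i φ hφi ⟨v, hv⟩, heig]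
    rfl
  have hne : ∃ v, v ≠ i ∧ φ v ≠ 0 := by
    obtain ⟨v, hv⟩ := Function.ne_iff.1 hφne
    exact ⟨v.1, v.2, hv⟩
  have hpos : ∀ v, v ≠ i → 0 < φ v := fun v hv => pos_of_eigen hconn' hne hnonneg hsum hv
  have hμpos : 0 < μ := eigenvalue_pos hconn hcard hφi hnonneg hpos hsum
  have hdec : ∀ k, x k ≠ i → φ (x (k + 1)) < φ (x k) := by
    intro k hk
    by_contra hcon
    have h1 : ∑ w ∈ G.neighborFinset (x k), (φ (x k) - φ w) ≤ 0 := by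
      refine Finset.sum_nonpos fun w hw => ?_
      have := (hstep k hk).2 w (by simpa using hw)
      linarith
    rw [hsum _ hk] at h1
    exact absurd (mul_pos hμpos (hpos _ hk)) (not_lt.2 h1)
  have hex : ∃ n, n < Fintype.card V ∧ x n = i := by
    by_contra! hcon
    have hlt : ∀ a b : ℕ, a < b → b < Fintype.card V → φ (x b) < φ (x a) := by
      intro a b hab
      induction b, hab using Nat.le_induction with
      | base => exact fun h => hdec a (hcon a (by omega))
      | succ b _ ih =>
        exact fun h => (hdec b (hcon b (by omega))).trans (ih (by omega))
    have hinj : Function.Injective fun k : Fin (Fintype.card V) => x k := by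
      intro a b hab
      have hab' : φ (x a) = φ (x b) := congrArg φ hab
      rcases lt_trichotomy a b with h | h | h
      · exact absurd hab' (hlt a b h b.2).ne'
      · exact h
      · exact absurd hab' (hlt b a h a.2).ne
    obtain ⟨k, hk⟩ := ((Fintype.bijective_iff_injective_and_card _).2 ⟨hinj, by simp⟩).2 i
    exact hcon k k.2 hk
  refine ⟨Nat.find hex, ?_, (Nat.find_spec hex).2, fun k hk => ?_⟩
  · have := (Nat.find_spec hex).1
    omega
  · have hki : x k ≠ i := fun h =>
      Nat.find_min hex hk ⟨hk.trans (Nat.find_spec hex).1, h⟩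
    exact ⟨hki, hdec k hki⟩
end

section
/- Let G = (V, E) be a finite tree (a simple connected acyclic graph) with |V| ≥ 2, and let i ∈ V be a leaf (a vertex of degree 1), so that G − i is connected. Let φ be an eigenvector of L_i associated to the smallest eigenvalue of L_i, normalized so that φ ≥ 0, and extend φ to V by φ(i) = 0. For any starting vertex j ∈ V, define a sequence by x₀ = j and, as long as x_k ≠ i, letting x_{k+1} be a neighbor of x_k at which φ attains its minimum over all neighbors of x_k. Then the sequence reaches i after exactly dist(j, i) steps; that is, the algorithm produces a shortest path from j to i. -/
/-!
Since `φ ≥ 0` solves `L_i φ = μ φ` and `G - i` is connected, `φ` is positive away from `i`: a zero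
of `φ` forces zeros at all neighbors. Summing `L φ` over all of `V` gives `0`, so
`μ ∑ φ = -(L φ) i = ∑_{w ∼ i} φ w > 0` and hence `μ > 0`.

Root the tree at `i`. At every `v ≠ i` the sum of `φ v - φ w` over the neighbors `w` of `v` is
`μ φ v > 0`. Going from the deepest vertices towards the root, the terms of the children are
already known to be negative, so the single remaining term, that of the parent, is positive:
`φ` strictly increases along every edge pointing away from `i` (`lt_of_dist_succ`). A neighbor
minimizing `φ` is therefore the parent, and each step lowers the distance to `i` by one.
-/

open Matrix

/-- The parent of a vertex of a tree rooted at `i` is unique. -/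
lemma parent_unique {V : Type*} {G : SimpleGraph V} (hconn : G.Connected) (hacyc : G.IsAcyclic)
    {i v w₁ w₂ : V} (h₁ : G.Adj v w₁) (h₂ : G.Adj v w₂)
    (d₁ : G.dist w₁ i + 1 = G.dist v i) (d₂ : G.dist w₂ i + 1 = G.dist v i) : w₁ = w₂ := by
  obtain ⟨p₁, hp₁⟩ := hconn.exists_walk_length_eq_dist w₁ i
  obtain ⟨p₂, hp₂⟩ := hconn.exists_walk_length_eq_dist w₂ i
  have q₁ : (SimpleGraph.Walk.cons h₁ p₁).IsPath :=
    SimpleGraph.Walk.isPath_of_length_eq_dist _ (by simp [hp₁, d₁])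
  have q₂ : (SimpleGraph.Walk.cons h₂ p₂).IsPath :=
    SimpleGraph.Walk.isPath_of_length_eq_dist _ (by simp [hp₂, d₂])
  have h := congrArg Subtype.val ((hacyc.subsingleton_path v i).elim ⟨_, q₁⟩ ⟨_, q₂⟩)
  have := congrArg SimpleGraph.Walk.snd h
  simpa using this

lemma exists_parent {V : Type*} {G : SimpleGraph V} (hconn : G.Connected) {i v : V}
    (hv : v ≠ i) : ∃ w, G.Adj v w ∧ G.dist w i + 1 = G.dist v i := by
  obtain ⟨p, hp⟩ := hconn.exists_walk_length_eq_dist v i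
  cases p with
  | nil => exact absurd rfl hv
  | @cons _ w _ h p =>
    refine ⟨w, h, ?_⟩
    have h1 := SimpleGraph.dist_le p
    have h2 := hconn.dist_triangle (u := v) (v := w) (w := i)
    have h3 : G.dist v w = 1 := SimpleGraph.dist_eq_one_iff_adj.2 h
    simp only [SimpleGraph.Walk.length_cons] at hp
    omega

lemma dist_adj_cases {V : Type*} {G : SimpleGraph V} (hconn : G.Connected) (hacyc : G.IsAcyclic)
    (i : V) {v w : V} (h : G.Adj v w) :
    G.dist w i + 1 = G.dist v i ∨ G.dist v i + 1 = G.dist w i := by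
  have hT : G.IsTree := ⟨hconn, hacyc⟩
  have h0 := hT.dist_ne_of_adj i h
  have h1 := hconn.dist_triangle (u := v) (v := w) (w := i)
  have h2 := hconn.dist_triangle (u := w) (v := v) (w := i)
  have h3 : G.dist v w = 1 := SimpleGraph.dist_eq_one_iff_adj.2 h
  have h4 : G.dist w v = 1 := SimpleGraph.dist_eq_one_iff_adj.2 h.symm
  rw [SimpleGraph.dist_comm, SimpleGraph.dist_comm (u := i)] at h0
  omega

/-- A function that is strictly superharmonic away from the root `i` of a tree strictly increases
from parent to child. The induction runs from the deepest vertices up to the root. -/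
lemma lt_of_dist_succ {V : Type*} [Fintype V] {G : SimpleGraph V} [DecidableRel G.Adj]
    (hconn : G.Connected) (hacyc : G.IsAcyclic) {i : V} {φ : V → ℝ}
    (hsuper : ∀ v, v ≠ i → 0 < ∑ w ∈ G.neighborFinset v, (φ v - φ w)) {v w : V}
    (hvw : G.Adj v w) (hd : G.dist w i + 1 = G.dist v i) : φ w < φ v := by
  classical
  obtain ⟨N, hN⟩ : ∃ N, ∀ u, G.dist u i ≤ N :=
    ⟨Finset.univ.sup fun u => G.dist u i,
      fun u => Finset.le_sup (f := fun u => G.dist u i) (Finset.mem_univ u)⟩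
  induction hn : N - G.dist v i using Nat.strong_induction_on generalizing v w with
  | _ n ih =>
    have hv : v ≠ i := by
      rintro rfl
      simp at hd
    have hpos := hsuper v hv
    rw [← Finset.add_sum_erase _ _ ((G.mem_neighborFinset v w).2 hvw)] at hpos
    have hchildren : ∑ u ∈ (G.neighborFinset v).erase w, (φ v - φ u) ≤ 0 := by
      refine Finset.sum_nonpos fun u hu => ?_
      rw [Finset.mem_erase, SimpleGraph.mem_neighborFinset] at hu
      rcases dist_adj_cases hconn hacyc i hu.2 with h | h
      · exact absurd (parent_unique hconn hacyc hu.2 hvw h hd) hu.1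
      · have := ih (N - G.dist u i) (by have := hN u; omega) hu.2.symm h rfl
        linarith
    linarith

lemma lapMatrix_mulVec_eq_sum {V : Type*} [Fintype V] [DecidableEq V] (G : SimpleGraph V)
    [DecidableRel G.Adj] (φ : V → ℝ) (v : V) :
    (G.lapMatrix ℝ *ᵥ φ) v = ∑ w ∈ G.neighborFinset v, (φ v - φ w) := by
  rw [SimpleGraph.lapMatrix_mulVec_apply, Finset.sum_sub_distrib]
  simp

/-- Because `φ i = 0`, the minor `L_i` acts on `φ` as the full Laplacian does. -/
lemma lapMinor_mulVec_eq {V : Type*} [Fintype V] [DecidableEq V] (G : SimpleGraph V)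
    [DecidableRel G.Adj] {i : V} {φ : V → ℝ} (hφi : φ i = 0) (v : {v : V // v ≠ i}) :
    (lapMinor G i *ᵥ fun u : {v : V // v ≠ i} => φ u.1) v = (G.lapMatrix ℝ *ᵥ φ) v.1 := by
  simp only [lapMinor, Matrix.mulVec, dotProduct, Matrix.submatrix_apply]
  rw [← Finset.add_sum_erase Finset.univ _ (Finset.mem_univ i), hφi, mul_zero, zero_add]
  exact (Finset.sum_subtype (Finset.univ.erase i) (p := fun u => u ≠ i) (by simp)
    (fun u => G.lapMatrix ℝ v.1 u * φ u)).symm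

theorem stmt_9 {V : Type*} [Fintype V] [DecidableEq V]
    (G : SimpleGraph V) [DecidableRel G.Adj]
    (hconn : G.Connected) (hacyc : G.IsAcyclic) (hcard : 2 ≤ Fintype.card V)
    (i : V) (hleaf : G.degree i = 1)
    (hconn' : (G.induce {v : V | v ≠ i}).Connected)
    (μ : ℝ)
    (hμ : IsLeast {μ' : ℝ | ∃ ψ : {v : V // v ≠ i} → ℝ, ψ ≠ 0 ∧
        (lapMinor G i).mulVec ψ = μ' • ψ} μ)
    -- φ : V → ℝ is the extension by φ i = 0 of an eigenvector of L_i
    -- for the smallest eigenvalue μ, normalized so that φ ≥ 0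
    (φ : V → ℝ) (hφi : φ i = 0)
    (hφne : (fun v : {v : V // v ≠ i} => φ v.1) ≠ 0)
    (heig : (lapMinor G i).mulVec (fun v : {v : V // v ≠ i} => φ v.1) =
      μ • fun v : {v : V // v ≠ i} => φ v.1)
    (hnonneg : ∀ v : V, 0 ≤ φ v)
    -- the algorithm: start at j, move to a neighbor minimizing φ
    (j : V) (x : ℕ → V) (hx0 : x 0 = j)
    (hstep : ∀ k : ℕ, x k ≠ i →
      G.Adj (x k) (x (k + 1)) ∧ ∀ w : V, G.Adj (x k) w → φ (x (k + 1)) ≤ φ w) :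
    -- the sequence reaches i after exactly dist(j, i) steps
    x (G.dist j i) = i ∧ ∀ k : ℕ, k < G.dist j i → x k ≠ i := by
  have hlap : ∀ v, v ≠ i → ∑ w ∈ G.neighborFinset v, (φ v - φ w) = μ * φ v := by
    intro v hv
    rw [← lapMatrix_mulVec_eq_sum, ← lapMinor_mulVec_eq G hφi ⟨v, hv⟩, heig]
    simp
  have hzero : ∀ v w, v ≠ i → φ v = 0 → G.Adj v w → φ w = 0 := by
    intro v w hv h0 hvw
    have h := hlap v hv
    simp only [h0, zero_sub, mul_zero, Finset.sum_neg_distrib, neg_eq_zero] at h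
    exact (Finset.sum_eq_zero_iff_of_nonneg fun u _ => hnonneg u).1 h w
      ((G.mem_neighborFinset v w).2 hvw)
  have hpos : ∀ v, v ≠ i → 0 < φ v := by
    intro v hv
    refine (hnonneg v).lt_of_ne' fun h0 => hφne (funext fun u => ?_)
    obtain ⟨p⟩ := hconn'.preconnected ⟨v, hv⟩ u
    have key : ∀ a b : {v : V | v ≠ i}, (G.induce {v : V | v ≠ i}).Walk a b →
        φ a = 0 → φ b = 0 := by
      intro a b q
      induction q with
      | nil => exact id
      | @cons a c _ h _ ih => exact fun ha => ih (hzero a c a.2 ha h)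
    exact key _ _ p h0
  have hμpos : 0 < μ := by
    obtain ⟨n, hn⟩ : ∃ n, G.Adj i n := (G.degree_pos_iff_exists_adj i).1 (by omega)
    -- the total flux of the Laplacian vanishes by symmetry of the adjacency relation
    have htotal : ∑ v, ∑ w ∈ G.neighborFinset v, (φ v - φ w) = 0 := by
      simp only [← lapMatrix_mulVec_eq_sum]
      have h := Matrix.dotProduct_mulVec (fun _ => (1 : ℝ)) (G.lapMatrix ℝ) φ
      rw [← Matrix.mulVec_transpose, (G.isSymm_lapMatrix ℝ).eq,
        SimpleGraph.lapMatrix_mulVec_const_eq_zero, zero_dotProduct] at h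
      simpa [dotProduct] using h
    rw [← Finset.add_sum_erase _ _ (Finset.mem_univ i),
      Finset.sum_congr rfl fun v hv => hlap v (Finset.ne_of_mem_erase hv),
      ← Finset.mul_sum] at htotal
    have hroot : ∑ w ∈ G.neighborFinset i, (φ i - φ w) < 0 := by
      refine Finset.sum_neg (fun w hw => ?_) ⟨n, (G.mem_neighborFinset i n).2 hn⟩
      rw [hφi, zero_sub, neg_lt_zero]
      exact hpos w ((G.mem_neighborFinset i w).1 hw).ne'
    have hsum : 0 ≤ ∑ v ∈ Finset.univ.erase i, φ v := Finset.sum_nonneg fun v _ => hnonneg v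
    by_contra! hle
    have := mul_nonpos_of_nonpos_of_nonneg hle hsum
    linarith
  have hsuper : ∀ v, v ≠ i → 0 < ∑ w ∈ G.neighborFinset v, (φ v - φ w) := fun v hv => by
    rw [hlap v hv]
    exact mul_pos hμpos (hpos v hv)
  have hdrop : ∀ k, x k ≠ i → G.dist (x (k + 1)) i + 1 = G.dist (x k) i := by
    intro k hk
    obtain ⟨hadj, hmin⟩ := hstep k hk
    obtain ⟨p, hp, hpd⟩ := exists_parent hconn hk
    have hlt := lt_of_dist_succ hconn hacyc hsuper hp hpd
    rcases dist_adj_cases hconn hacyc i hadj with h | h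
    · exact h
    · have := lt_of_dist_succ hconn hacyc hsuper hadj.symm h
      have := hmin p hp
      linarith
  have hdist : ∀ k, k ≤ G.dist j i → G.dist (x k) i + k = G.dist j i := by
    intro k
    induction k with
    | zero => simp [hx0]
    | succ k ih =>
      intro hk
      have h := ih (by omega)
      have hne : x k ≠ i := by
        intro he
        rw [he, SimpleGraph.dist_self] at h
        omega
      have := hdrop k hne
      omega
  refine ⟨?_, fun k hk he => ?_⟩
  · have h := hdist _ le_rfl
    exact hconn.dist_eq_zero_iff.1 (by omega)
  · have h := hdist k hk.le
    rw [he, SimpleGraph.dist_self] at h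
    omega
end

section
/- Let G = (V, E) be a simple graph on a finite vertex set V in which every vertex has degree at least 1, let i ∈ V, let μ > 0, and let φ : V → ℝ satisfy φ(i) = 0, φ(v) > 0 for all v ≠ i, and, for every vertex v ≠ i, the equation φ(v) − ∑_{(v, w) ∈ E} φ(w) / √(deg(v) · deg(w)) = μ · φ(v) (the v-th row of the eigenvalue equation for the symmetric normalized Laplacian Id − D^{−1/2} A D^{−1/2} with the row and column indexed by i removed). Then every vertex v ≠ i has at least one neighbor w with φ(w) · deg(w)^{−1/2} < φ(v) · deg(v)^{−1/2}. -/
/-! The function `u = φ / √deg` satisfies, at each `v ≠ i`,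
`∑_{w ~ v} φ w / √(deg v * deg w) = (√(deg v))⁻¹ * ∑_{w ~ v} u w`. If every neighbor `w` of `v` had
`u w ≥ u v`, this sum would be at least `deg v * φ v / deg v = φ v`, so the eigenvalue equation would
give `μ * φ v ≤ 0`, contradicting `μ > 0` and `φ v > 0`. -/

open Finset

theorem stmt_10 {V : Type*} [Fintype V] [DecidableEq V]
    (G : SimpleGraph V) [DecidableRel G.Adj]
    (hdeg : ∀ v : V, 1 ≤ G.degree v)
    (i : V) (μ : ℝ) (hμ : 0 < μ) (φ : V → ℝ)
    (hφi : φ i = 0) (hφpos : ∀ v : V, v ≠ i → 0 < φ v)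
    (heig : ∀ v : V, v ≠ i →
      φ v - ∑ w ∈ G.neighborFinset v,
        φ w / Real.sqrt ((G.degree v : ℝ) * (G.degree w : ℝ)) = μ * φ v) :
    ∀ v : V, v ≠ i → ∃ w : V, G.Adj v w ∧
      φ w * (Real.sqrt (G.degree w))⁻¹ < φ v * (Real.sqrt (G.degree v))⁻¹ := by
  intro v hv
  by_contra! h
  have hd : (0 : ℝ) < G.degree v := by exact_mod_cast hdeg v
  have hterm : ∀ w ∈ G.neighborFinset v,
      φ v / G.degree v ≤ φ w / Real.sqrt ((G.degree v : ℝ) * (G.degree w : ℝ)) := by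
    intro w hw
    have hu := mul_le_mul_of_nonneg_right (h w ((G.mem_neighborFinset v w).1 hw))
      (inv_nonneg.2 (Real.sqrt_nonneg (G.degree v : ℝ)))
    calc φ v / G.degree v
        = φ v * (Real.sqrt (G.degree v))⁻¹ * (Real.sqrt (G.degree v))⁻¹ := by
          rw [mul_assoc, ← mul_inv, Real.mul_self_sqrt hd.le, div_eq_mul_inv]
      _ ≤ φ w * (Real.sqrt (G.degree w))⁻¹ * (Real.sqrt (G.degree v))⁻¹ := hu
      _ = φ w / Real.sqrt ((G.degree v : ℝ) * (G.degree w : ℝ)) := by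
          rw [Real.sqrt_mul hd.le, div_eq_mul_inv, mul_inv]; ring
  have hsum := Finset.card_nsmul_le_sum _ _ _ hterm
  rw [G.card_neighborFinset_eq_degree, nsmul_eq_mul, mul_div_cancel₀ _ hd.ne'] at hsum
  linarith [heig v hv, mul_pos hμ (hφpos v hv)]
end
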